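/- The CM value of the hauptmodul of the Fricke group Γ₀*(10) at the point (3 + i)/10 equals -4: j₁₀*((3 + i)/10) = -4. Consequently, since the CM point (3+i)/10 is the root α_Q of the quadratic form Q = [10,-6,1] of discriminant -4, whose class 𝒬_{4,10}/Γ₀*(10) is a single orbit with |Γ̄₀*(10)_Q| = 4, and φ₂(j₁₀*) = (j₁₀*)² - 44, one has t₂^{(10*)}(4) = ((-4)² - 44)/4 = -7. -/

import Mathlib

open Complex Matrix

noncomputable section

/-- `SL(2, ℝ)`. -/
abbrev SL2R := Matrix.SpecialLinearGroup (Fin 2) ℝ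

/-- `q = e^{2πiz}` (also used as `ζ = e^{2πiz}`). -/
def qc (z : ℂ) : ℂ := Complex.exp (2 * Real.pi * Complex.I * z)

/-- The Dedekind eta function `η(z) = q^{1/24} ∏_{n ≥ 1} (1 - q^n)` (intended for `Im z > 0`). -/
def dedekindEta (z : ℂ) : ℂ :=
  Complex.exp (Real.pi * Complex.I * z / 12) *
    ∏' n : ℕ, (1 - Complex.exp (2 * Real.pi * Complex.I * ((n : ℂ) + 1) * z))

/-- The hauptmodul `j_N` of `Γ₀(N)` for `N ∈ {2, 3, 5, 7, 13, 6, 10}`. -/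
def jn (N : ℕ) (z : ℂ) : ℂ :=
  if N = 6 then (dedekindEta (2 * z) * dedekindEta (3 * z) ^ 3 / (dedekindEta z * dedekindEta (6 * z) ^ 3)) ^ 3 - 3
  else if N = 10 then dedekindEta (2 * z) * dedekindEta (5 * z) ^ 5 / (dedekindEta z * dedekindEta (10 * z) ^ 5) - 1
  else (dedekindEta z / dedekindEta ((N : ℂ) * z)) ^ (24 / (N - 1)) + 24 / ((N : ℂ) - 1)

/-- The hauptmodul `j_N^*` of the Fricke group `Γ₀^*(N)` for `N ∈ {2, 3, 5, 7, 13, 6, 10}`. -/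
def jnStar (N : ℕ) (z : ℂ) : ℂ :=
  if N = 6 then
    (dedekindEta z * dedekindEta (3 * z) / (dedekindEta (2 * z) * dedekindEta (6 * z))) ^ 6 + 6 +
      2 ^ 6 * (dedekindEta (2 * z) * dedekindEta (6 * z) / (dedekindEta z * dedekindEta (3 * z))) ^ 6
  else if N = 10 then
    (dedekindEta z * dedekindEta (5 * z) / (dedekindEta (2 * z) * dedekindEta (10 * z))) ^ 4 + 4 +
      2 ^ 4 * (dedekindEta (2 * z) * dedekindEta (10 * z) / (dedekindEta z * dedekindEta (5 * z))) ^ 4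
  else
    (dedekindEta z / dedekindEta ((N : ℂ) * z)) ^ (24 / (N - 1)) + 24 / ((N : ℂ) - 1) +
      (N : ℂ) ^ (12 / (N - 1)) * (dedekindEta ((N : ℂ) * z) / dedekindEta z) ^ (24 / (N - 1))

/-- `f` has the `q`-expansion `f(τ) = Σ_{n ≥ n₀} (a n) q^n` on the upper half-plane. -/
def HasQExp (f : ℂ → ℂ) (a : ℤ → ℂ) (n₀ : ℤ) : Prop :=
  (∀ n < n₀, a n = 0) ∧
    ∀ τ : ℂ, 0 < τ.im →
      HasSum (fun m : ℕ => a (n₀ + m) * qc τ ^ (n₀ + (m : ℤ))) (f τ)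

/-- `Γ₀(N)` viewed as a subgroup of `SL(2, ℝ)`. -/
def Gamma0SL2R (N : ℕ) : Subgroup SL2R :=
  (CongruenceSubgroup.Gamma0 N).map
    (Matrix.SpecialLinearGroup.map (Int.castRingHom ℝ))

/-- The set of Atkin–Lehner matrices `W_e` of level `N`:
`W_e = e^{-1/2} [[xe, y], [zN, we]]`, `x, y, z, w ∈ ℤ` (determinant `1` being automatic). -/
def atkinLehnerSet (N e : ℕ) : Set SL2R :=
  { g | ∃ x y z w : ℤ,
      g.1 = (Real.sqrt e)⁻¹ • !![(x : ℝ) * e, (y : ℝ); (z : ℝ) * N, (w : ℝ) * e] }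

/-- The Fricke group `Γ₀^*(N)`, generated by `Γ₀(N)` and all Atkin–Lehner involutions `W_e`
for `e ∣ N` with `gcd(e, N/e) = 1`. -/
def FrickeGroup (N : ℕ) : Subgroup SL2R :=
  Subgroup.closure
    ((Gamma0SL2R N : Set SL2R) ∪
      ⋃ e ∈ {e : ℕ | e ∣ N ∧ Nat.Coprime e (N / e)}, atkinLehnerSet N e)

/-- The Gram matrix of the integral binary quadratic form `[a, b, c]`. -/
def formMat (a b c : ℤ) : Matrix (Fin 2) (Fin 2) ℝ :=
  !![(a : ℝ), (b : ℝ) / 2; (b : ℝ) / 2, (c : ℝ)]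

/-- `𝒬_{d,N}`: positive definite integral binary quadratic forms `[a, b, c]` of
discriminant `-d` with `N ∣ a`. -/
def QdN (d : ℤ) (N : ℕ) : Set (Matrix (Fin 2) (Fin 2) ℝ) :=
  { M | ∃ a b c : ℤ, M = formMat a b c ∧ 0 < a ∧ b ^ 2 - 4 * a * c = -d ∧ (N : ℤ) ∣ a }

/-- `𝒬_{d,N,h}`: members of `𝒬_{d,N}` with `b ≡ h (mod 2N)`. -/
def QdNh (d : ℤ) (N : ℕ) (h : ℤ) : Set (Matrix (Fin 2) (Fin 2) ℝ) :=
  { M | ∃ a b c : ℤ, M = formMat a b c ∧ 0 < a ∧ b ^ 2 - 4 * a * c = -d ∧ (N : ℤ) ∣ a ∧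
      (b : ZMod (2 * N)) = (h : ZMod (2 * N)) }

/-- Orbit relation of the (right) action `Q ↦ Q ∘ g`, i.e. `M ↦ gᵀ M g`, of `Γ ≤ SL(2, ℝ)`
on a set `S` of Gram matrices of quadratic forms. -/
def formRel (Γ : Subgroup SL2R) (S : Set (Matrix (Fin 2) (Fin 2) ℝ)) (Q Q' : S) : Prop :=
  ∃ g ∈ Γ, Q'.1 = (g.1)ᵀ * Q.1 * g.1

/-- The CM point `α_Q` of a positive definite form (as a point of `ℂ`; it lies in the upper
half-plane): `α_Q = (-b + i √d) / (2a) = (-(b/2) + i √(det M)) / a`. -/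
def cmPointC (M : Matrix (Fin 2) (Fin 2) ℝ) : ℂ :=
  ((-(M 0 1) : ℝ) + Complex.I * Real.sqrt M.det) / ((M 0 0 : ℝ) : ℂ)

/-- The order of the stabilizer of the form `M` in `Γ/{±1}` (the stabilizer in `Γ` contains
`±1` and has twice the cardinality). -/
def stabOrder (Γ : Subgroup SL2R) (M : Matrix (Fin 2) (Fin 2) ℝ) : ℕ :=
  Nat.card { g : SL2R // g ∈ Γ ∧ (g.1)ᵀ * M * g.1 = M } / 2

/-- The modular trace `Σ_{Q ∈ S/Γ} f(α_Q) / |Γ̄_Q|`. -/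
def classTrace (Γ : Subgroup SL2R) (f : ℂ → ℂ)
    (S : Set (Matrix (Fin 2) (Fin 2) ℝ)) : ℂ :=
  ∑ᶠ O : Quot (formRel Γ S),
    f (cmPointC (Quot.out O).1) / (stabOrder Γ (Quot.out O).1 : ℂ)

/-- `t₂^{(N*)}(d)`, where `P` is the polynomial with `φ₂(j_N^*) = P(j_N^*)`;
includes the paper's conventions at nonpositive indices. -/
def t2Star (N : ℕ) (P : Polynomial ℂ) (d : ℤ) : ℂ :=
  if 0 < d then
    classTrace (FrickeGroup N) (fun z => Polynomial.eval (jnStar N z) P) (QdN d N)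
  else if d = 0 then (if N = 2 then 5 else if N = 6 ∨ N = 10 then 5 / 2 else 3)
  else if d = -1 then -1
  else if d = -4 then -2
  else 0

/-- `σ₁^{(N)}(x) = Σ_{d ∣ x, N ∤ d} d` for `x ∈ ℤ_{>0}`, `(N-1)/24` at `x = 0`, and `0`
off `ℤ_{≥0}`. -/
def sigmaN (N : ℕ) (x : ℚ) : ℂ :=
  if x = 0 then ((N : ℂ) - 1) / 24
  else if 0 < x ∧ x.den = 1 then
    ∑ d ∈ (Nat.divisors x.num.toNat).filter (fun d => ¬ N ∣ d), (d : ℂ)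
  else 0

/-- `σ₁(x) = Σ_{d ∣ x} d` for `x ∈ ℤ_{>0}` and `0` otherwise. -/
def sigmaQ (x : ℚ) : ℂ :=
  if 0 < x ∧ x.den = 1 then ∑ d ∈ Nat.divisors x.num.toNat, (d : ℂ) else 0

/-- A weakly holomorphic Jacobi form of weight `k` and index `m`. -/
structure WeakJacobiForm (k : ℤ) (m : ℕ) where
  toFun : ℂ → ℂ → ℂ
  holo : DifferentiableOn ℂ (fun p : ℂ × ℂ => toFun p.1 p.2)
      ({τ : ℂ | 0 < τ.im} ×ˢ (Set.univ : Set ℂ))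
  slash_inv : ∀ a b c d : ℤ, a * d - b * c = 1 → ∀ τ z : ℂ, 0 < τ.im →
    ((c : ℂ) * τ + d) ^ (-k) *
        Complex.exp (-(2 * Real.pi * Complex.I * m * c * z ^ 2) / ((c : ℂ) * τ + d)) *
        toFun (((a : ℂ) * τ + b) / ((c : ℂ) * τ + d)) (z / ((c : ℂ) * τ + d)) =
      toFun τ z
  elliptic : ∀ lm mu : ℤ, ∀ τ z : ℂ, 0 < τ.im →
    Complex.exp (2 * Real.pi * Complex.I * m * ((lm : ℂ) ^ 2 * τ + 2 * lm * z)) *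
        toFun τ (z + lm * τ + mu) = toFun τ z
  coeff : ℤ → ℤ → ℂ
  coeff_neg_finite : {n : ℤ | n < 0 ∧ ∃ r : ℤ, coeff n r ≠ 0}.Finite
  expansion : ∀ τ z : ℂ, 0 < τ.im →
    HasSum (fun p : ℤ × ℤ => coeff p.1 p.2 * qc τ ^ p.1 * qc z ^ p.2) (toFun τ z)

/-- Meromorphy of weight `k` at all cusps: at each cusp `γ∞`, the function `F|_k γ` has a
Fourier expansion in fractional powers of `q` with only finitely many negative terms. -/
def MeromAtCusps (k : ℤ) (F : ℂ → ℂ) : Prop :=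
  ∀ a b c d : ℤ, a * d - b * c = 1 →
    ∃ (M : ℕ) (cs : ℤ → ℂ) (n₀ : ℤ), 0 < M ∧
      ∀ τ : ℂ, 0 < τ.im →
        HasSum
          (fun j : ℕ => cs (n₀ + j) *
            Complex.exp (2 * Real.pi * Complex.I * τ / M) ^ (n₀ + (j : ℤ)))
          (((c : ℂ) * τ + d) ^ (-k) * F (((a : ℂ) * τ + b) / ((c : ℂ) * τ + d)))

/-- The Möbius action of an element of `SL(2, ℝ)` on `ℂ`. -/
def moebius (g : SL2R) (z : ℂ) : ℂ :=
  ((g.1 0 0 : ℝ) * z + ((g.1 0 1 : ℝ) : ℂ)) / ((g.1 1 0 : ℝ) * z + ((g.1 1 1 : ℝ) : ℂ))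

/-- A weakly holomorphic modular function on `Γ`: holomorphic on the upper half-plane,
`Γ`-invariant, with poles only at the cusps. -/
def IsWeaklyHolModularFn (Γ : Subgroup SL2R) (f : ℂ → ℂ) : Prop :=
  DifferentiableOn ℂ f {z : ℂ | 0 < z.im} ∧
    (∀ g ∈ Γ, ∀ z : ℂ, 0 < z.im → f (moebius g z) = f z) ∧
    MeromAtCusps 0 f

/-- The set `L_{h, d/4N}` of vectors
`X = [[b + h/2N, c/N], [-a, -(b + h/2N)]]`, `a, b, c ∈ ℤ`, of norm `q(X) = d/4N`. -/
def LhSet (N : ℕ) (h d : ℤ) : Set (Matrix (Fin 2) (Fin 2) ℝ) :=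
  { X | ∃ a b c : ℤ,
      X = !![(b : ℝ) + (h : ℝ) / (2 * N), (c : ℝ) / N;
             -(a : ℝ), -((b : ℝ) + (h : ℝ) / (2 * N))] ∧
      (2 * b * N + h) ^ 2 - 4 * a * c * N = -d }

/-- The map `X ↦ N ⬝ [[0,-1],[1,0]] ⬝ X` from vectors to Gram matrices of quadratic forms. -/
def vecToForm (N : ℕ) (X : Matrix (Fin 2) (Fin 2) ℝ) : Matrix (Fin 2) (Fin 2) ℝ :=
  (N : ℝ) • (!![(0 : ℝ), -1; 1, 0] * X)

/-- Orbit relation of `Γ` acting by conjugation `g.X = g X g⁻¹` on a set `S` of vectors. -/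
def vecRel (Γ : Subgroup SL2R) (S : Set (Matrix (Fin 2) (Fin 2) ℝ)) (X X' : S) : Prop :=
  ∃ g ∈ Γ, X'.1 = g.1 * X.1 * (g⁻¹).1

/-- The Heegner point `D_X ∈ ℍ` of a vector `X` of positive norm. -/
def heegnerC (X : Matrix (Fin 2) (Fin 2) ℝ) : ℂ :=
  ((X 0 0 / X 1 0 : ℝ) : ℂ) + Complex.I * Real.sqrt (X.det / (X 1 0) ^ 2)

/-- The order of the stabilizer of the vector `X` in `Γ/{±1}`. -/
def vecStabOrder (Γ : Subgroup SL2R) (X : Matrix (Fin 2) (Fin 2) ℝ) : ℕ :=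
  Nat.card { g : SL2R // g ∈ Γ ∧ g.1 * X * (g⁻¹).1 = X } / 2

/-- The modular trace `t_f(h, m) = Σ_{X ∈ Γ\L_{h,m}} f(D_X) / |Γ̄_X|`. -/
def vecTrace (Γ : Subgroup SL2R) (f : ℂ → ℂ) (S : Set (Matrix (Fin 2) (Fin 2) ℝ)) : ℂ :=
  ∑ᶠ O : Quot (vecRel Γ S), f (heegnerC (Quot.out O).1) / (vecStabOrder Γ (Quot.out O).1 : ℂ)

/-- The weight-2 Eisenstein series `E₂(z) = 1 - 24 Σ_{n ≥ 1} σ₁(n) qⁿ`. -/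
def E2 (z : ℂ) : ℂ :=
  1 - 24 * ∑' n : ℕ, (∑ d ∈ Nat.divisors (n + 1), (d : ℂ)) * qc z ^ (n + 1)

/-- `E₂^{(N)}(z) = N E₂(Nz) - E₂(z)`. -/
def E2N (N : ℕ) (z : ℂ) : ℂ := (N : ℂ) * E2 ((N : ℂ) * z) - E2 z

end

/-!
Write `P(z) = (η(z)η(5z))⁴` and `t(z) = P(z) / P(2z)`, so that `j₁₀* = t + 4 + 16/t`. The
multipliers of `η⁴` at `z` and at `5z` cancel, whence `P` has weight `4` and trivial character for
`Γ₀*(5)`; an Atkin–Lehner matrix of level `10` therefore sends `t` to `t` or to `16/t`, and `j₁₀*`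
is invariant under `Γ₀*(10)`. For `α = (3 + i)/10` the matrix `[[2, -1], [5, -2]] ∈ Γ₀(5)` sends
`2α` to `α` with automorphy factor `(1 + i)⁴ = -4`, so `t(α) = -4` and `j₁₀*(α) = -4 + 4 - 4`.

A form of discriminant `-4` has an integral Gram matrix of determinant `1`, and so is a sum of two
squares of linear forms with integral coefficients. Comparing this with
`[10, -6, 1] = X² + (3X - Y)²` shows that `𝒬_{4,10}` is a single `Γ₀*(10)`-orbit. The stabilizer of
`[10, -6, 1]` consists of the rotations attached to the Gaussian integers of norm `1` and `2`; it is
cyclic of order `8`, generated by the rotation attached to `1 + i`.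
-/

section Eta

open ModularForm UpperHalfPlane MatrixGroups

lemma dedekindEta_eq_eta (z : ℂ) : dedekindEta z = ModularForm.eta z := by
  unfold dedekindEta ModularForm.eta
  congr 1
  · rw [Function.Periodic.qParam]
    congr 1
    push_cast
    ring
  · exact tprod_congr fun n => by rw [eta_q_eq_cexp]

lemma dedekindEta_ne_zero {z : ℂ} (hz : 0 < z.im) : dedekindEta z ≠ 0 := by
  rw [dedekindEta_eq_eta]
  exact ModularForm.eta_ne_zero hz

lemma dedekindEta_add_one_pow_four (z : ℂ) :
    dedekindEta (z + 1) ^ 4 = ZMod.stdAddChar (1 : ZMod 6) * dedekindEta z ^ 4 := by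
  have hprod (n : ℕ) : Complex.exp (2 * Real.pi * Complex.I * ((n : ℂ) + 1) * (z + 1)) =
      Complex.exp (2 * Real.pi * Complex.I * ((n : ℂ) + 1) * z) :=
    Complex.exp_eq_exp_iff_exists_int.2 ⟨n + 1, by push_cast; ring⟩
  have hchar : ZMod.stdAddChar (1 : ZMod 6) = Complex.exp (Real.pi * Complex.I / 3) := by
    rw [← Int.cast_one, ZMod.stdAddChar_coe]
    congr 1
    push_cast
    ring
  simp only [dedekindEta, hprod, hchar, mul_pow, ← Complex.exp_nat_mul]
  rw [← mul_assoc, ← Complex.exp_add]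
  congr 2
  push_cast
  ring

lemma dedekindEta_neg_inv_pow_four {z : ℂ} (hz : 0 < z.im) :
    dedekindEta (-1 / z) ^ 4 = -z ^ 2 * dedekindEta z ^ 4 := by
  have h := ModularForm.eta_comp_eq_csqrt_I_inv (show z ∈ upperHalfPlaneSet from hz)
  have hsqrt (w : ℂ) : Complex.sqrt w ^ 4 = w ^ 2 := by
    rw [show 4 = 2 * 2 from rfl, pow_mul, Complex.sqrt, ← Complex.cpow_nat_mul]
    norm_num
  simp only [Function.comp_apply, Pi.smul_apply, Pi.mul_apply, smul_eq_mul] at h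
  rw [dedekindEta_eq_eta, dedekindEta_eq_eta, h, mul_pow, mul_pow, inv_pow, hsqrt, hsqrt,
    Complex.I_sq]
  ring

/-- The fourth power of the Dedekind eta function on the upper half-plane, a modular form of
weight `2` for `SL(2, ℤ)` with a character of order `6`. -/
noncomputable def etaPowFour (τ : ℍ) : ℂ := dedekindEta τ ^ 4

/-- The exponent `E`, modulo `6`, of the character `γ ↦ e^{πiE(γ)/3}` of `η⁴` at
`γ = [[a, b], [c, d]]`; for odd `c` this is Petersson's formula for the multiplier of `η`, and
modulo `6` the same expression also covers even `c`. -/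
def etaExponent (a b c d : ZMod 6) : ZMod 6 :=
  (a + d) * c - b * d * (c ^ 2 - 1) - 3 * c

lemma etaExponent_translate (a b c d : ZMod 6) (h : a * d - b * c = 1) :
    etaExponent (a + c) (b + d) c d = 1 + etaExponent a b c d := by
  revert a b c d
  simp only [etaExponent]
  decide +kernel

lemma etaExponent_invert (a b c d : ZMod 6) (h : a * d - b * c = 1) :
    etaExponent (-c) (-d) a b = 3 + etaExponent a b c d := by
  revert a b c d
  simp only [etaExponent]
  decide +kernel

/-- `etaExponent` as a function on `SL(2, ℤ)`. -/
def etaExponentSL (γ : SL(2, ℤ)) : ZMod 6 := etaExponent (γ 0 0) (γ 0 1) (γ 1 0) (γ 1 1)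

lemma det_cast_zmod_six (γ : SL(2, ℤ)) :
    (γ 0 0 : ZMod 6) * γ 1 1 - γ 0 1 * γ 1 0 = 1 := by
  exact_mod_cast congrArg (Int.cast : ℤ → ZMod 6) ((Matrix.det_fin_two γ.1).symm.trans γ.2)

lemma etaExponentSL_T_mul (γ : SL(2, ℤ)) :
    etaExponentSL (ModularGroup.T * γ) = 1 + etaExponentSL γ := by
  rw [etaExponentSL, etaExponentSL, ← etaExponent_translate _ _ _ _ (det_cast_zmod_six γ)]
  simp [ModularGroup.coe_T, Matrix.mul_apply, Fin.sum_univ_two]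

lemma etaExponentSL_S_mul (γ : SL(2, ℤ)) :
    etaExponentSL (ModularGroup.S * γ) = 3 + etaExponentSL γ := by
  rw [etaExponentSL, etaExponentSL, ← etaExponent_invert _ _ _ _ (det_cast_zmod_six γ)]
  simp [ModularGroup.coe_S, Matrix.mul_apply, Fin.sum_univ_two]

lemma etaPowFour_slash_T :
    etaPowFour ∣[(2 : ℤ)] ModularGroup.T = ZMod.stdAddChar (1 : ZMod 6) • etaPowFour := by
  ext τ
  rw [SL_slash_apply, modular_T_smul]
  simp [etaPowFour, ModularGroup.denom_apply, ModularGroup.coe_T, add_comm (1 : ℂ),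
    dedekindEta_add_one_pow_four]

lemma stdAddChar_three : ZMod.stdAddChar (3 : ZMod 6) = -1 := by
  rw [← Complex.exp_pi_mul_I, show (3 : ZMod 6) = ((3 : ℤ) : ZMod 6) from rfl,
    ZMod.stdAddChar_coe]
  congr 1
  push_cast
  ring

lemma etaPowFour_slash_S :
    etaPowFour ∣[(2 : ℤ)] ModularGroup.S = ZMod.stdAddChar (3 : ZMod 6) • etaPowFour := by
  ext τ
  have h := dedekindEta_neg_inv_pow_four τ.2
  have hτ : (τ : ℂ) ≠ 0 := UpperHalfPlane.ne_zero τ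
  rw [SL_slash_apply, modular_S_smul, ModularGroup.denom_S]
  simp only [etaPowFour, Pi.smul_apply, smul_eq_mul, stdAddChar_three, inv_neg]
  rw [show -(τ : ℂ)⁻¹ = -1 / τ by ring, h]
  field_simp

theorem etaPowFour_slash (γ : SL(2, ℤ)) :
    etaPowFour ∣[(2 : ℤ)] γ = ZMod.stdAddChar (etaExponentSL γ) • etaPowFour := by
  have key (x y : SL(2, ℤ)) (hx : x ∈ ({ModularGroup.S, ModularGroup.T} : Set SL(2, ℤ))) :
      etaPowFour ∣[(2 : ℤ)] (x * y) = ZMod.stdAddChar (etaExponentSL (x * y)) • etaPowFour ↔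
        etaPowFour ∣[(2 : ℤ)] y = ZMod.stdAddChar (etaExponentSL y) • etaPowFour := by
    rw [SlashAction.slash_mul]
    rcases hx with rfl | rfl
    · rw [etaPowFour_slash_S, SL_smul_slash, etaExponentSL_S_mul, AddChar.map_add_eq_mul, mul_smul,
        smul_right_inj (AddChar.val_isUnit ..).ne_zero]
    · rw [etaPowFour_slash_T, SL_smul_slash, etaExponentSL_T_mul, AddChar.map_add_eq_mul, mul_smul,
        smul_right_inj (AddChar.val_isUnit ..).ne_zero]
  have hγ : γ ∈ Subgroup.closure {ModularGroup.S, ModularGroup.T} := by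
    rw [SpecialLinearGroup.SL2Z_generators]; trivial
  induction hγ using Subgroup.closure_induction_left with
  | one => simp [etaExponentSL, etaExponent]
  | mul_left x hx y _ ih => exact (key x y hx).2 ih
  | inv_mul_cancel x hx y _ ih => exact (key x _ hx).1 (by rwa [mul_inv_cancel_left])

theorem dedekindEta_moebius_pow_four {a b c d : ℤ} (h : a * d - b * c = 1) {z : ℂ}
    (hz : 0 < z.im) :
    dedekindEta ((a * z + b) / (c * z + d)) ^ 4 =
      ZMod.stdAddChar (etaExponent a b c d) * (c * z + d) ^ 2 * dedekindEta z ^ 4 := by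
  let γ : SL(2, ℤ) := ⟨!![a, b; c, d], by rw [Matrix.det_fin_two_of, h]⟩
  let τ : ℍ := ⟨z, hz⟩
  have hsmul : ((γ • τ : ℍ) : ℂ) = (a * z + b) / (c * z + d) := by
    rw [coe_specialLinearGroup_apply]
    simp [γ, τ]
  have hdenom : denom γ τ = c * z + d := by
    rw [ModularGroup.denom_apply]
    simp [γ, τ]
  have hslash := congrFun (etaPowFour_slash γ) τ
  rw [SL_slash_apply, _root_.zpow_neg, ← div_eq_mul_inv,
    div_eq_iff (zpow_ne_zero _ (denom_ne_zero γ τ)), hdenom, zpow_ofNat, etaPowFour,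
    hsmul] at hslash
  rw [hslash]
  exact mul_right_comm ..

end Eta

section LevelTen

lemma etaExponent_add_etaExponent_eq_zero {r s a b c d : ZMod 6} (hrs : r * s = -1)
    (h : r * a * d - s * b * c = 1) :
    etaExponent (r * a) b (s * c) d + etaExponent a (s * b) c (r * d) = 0 := by
  obtain ⟨rfl, rfl⟩ | ⟨rfl, rfl⟩ : r = 1 ∧ s = -1 ∨ r = -1 ∧ s = 1 := by
    clear h; revert r s; decide
  all_goals
    revert a b c d
    simp only [etaExponent]
    decide +kernel

lemma im_natCast_mul_pos {n : ℕ} (hn : n ≠ 0) {z : ℂ} (hz : 0 < z.im) : 0 < ((n : ℂ) * z).im := by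
  rw [← nsmul_eq_mul, Complex.im_nsmul]
  positivity

/-- For `rs ≡ -1 (mod 6)` the multipliers of `η⁴` at `z` and at `rsz` cancel. -/
theorem dedekindEta_mul_dedekindEta_atkinLehner_pow_four {r s : ℕ} (hrs : (r * s : ZMod 6) = -1)
    {a b c d : ℤ} (h : r * a * d - s * b * c = 1) {z w : ℂ} (hz : 0 < z.im)
    (hw : w = (r * a * z + b) / (r * (s * c * z + d))) :
    (dedekindEta (r * w) * dedekindEta (s * w)) ^ 4 =
      r ^ 2 * (s * c * z + d) ^ 4 * (dedekindEta z * dedekindEta (r * s * z)) ^ 4 := by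
  have hne : (r * s : ZMod 6) ≠ 0 := hrs ▸ by decide
  have hr : r ≠ 0 := by rintro rfl; simp at hne
  have hs : s ≠ 0 := by rintro rfl; simp at hne
  have hrC : (r : ℂ) ≠ 0 := Nat.cast_ne_zero.2 hr
  have h₁ := dedekindEta_moebius_pow_four (a := r * a) (b := b) (c := s * c) (d := d)
    (by linear_combination h) hz
  have h₂ := dedekindEta_moebius_pow_four (a := a) (b := s * b) (c := c) (d := r * d)
    (by linear_combination h) (im_natCast_mul_pos (mul_ne_zero hr hs) hz)
  have hψ := congrArg ZMod.stdAddChar (etaExponent_add_etaExponent_eq_zero hrs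
    (a := a) (b := b) (c := c) (d := d) (by exact_mod_cast congrArg (Int.cast : ℤ → ZMod 6) h))
  rw [AddChar.map_add_eq_mul, AddChar.map_zero_eq_one] at hψ
  push_cast at h₁ h₂
  have hrw : r * w = (r * a * z + b) / (s * c * z + d) := by rw [hw]; field_simp
  have hsw : s * w = (a * (r * s * z) + s * b) / (c * (r * s * z) + r * d) := by
    rw [hw]; ring_nf
  rw [mul_pow, mul_pow, hrw, hsw, h₁, h₂]
  linear_combination (r ^ 2 * (s * c * z + d) ^ 4 * dedekindEta z ^ 4 *
    dedekindEta (r * s * z) ^ 4) * hψ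

/-- `(η(z)η(5z))⁴`, a modular form of weight `4` for `Γ₀*(5)`. -/
noncomputable def etaProductFive (z : ℂ) : ℂ := (dedekindEta z * dedekindEta (5 * z)) ^ 4

lemma etaProductFive_ne_zero {z : ℂ} (hz : 0 < z.im) : etaProductFive z ≠ 0 :=
  pow_ne_zero _ <| mul_ne_zero (dedekindEta_ne_zero hz)
    (dedekindEta_ne_zero <| by simpa using im_natCast_mul_pos (n := 5) (by norm_num) hz)

theorem etaProductFive_atkinLehner {r s : ℕ} (hrs : r * s = 5) {a b c d : ℤ}
    (h : r * a * d - s * b * c = 1) {z : ℂ} (hz : 0 < z.im) :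
    etaProductFive ((r * a * z + b) / (r * (s * c * z + d))) =
      r ^ 2 * (s * c * z + d) ^ 4 * etaProductFive z := by
  have hmod : (r * s : ZMod 6) = -1 := by rw [← Nat.cast_mul, hrs]; rfl
  have hprod : (r * s : ℂ) = 5 := by exact_mod_cast hrs
  have key := dedekindEta_mul_dedekindEta_atkinLehner_pow_four hmod h hz rfl
  rw [hprod] at key
  rw [etaProductFive, etaProductFive, ← key]
  obtain rfl | rfl := (Nat.dvd_prime Nat.prime_five).1 (Dvd.intro s hrs)
  · obtain rfl : s = 5 := by omega
    simp
  · obtain rfl : s = 1 := by omega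
    simp [mul_comm (dedekindEta (5 * _))]

/-- `t(z) = (η(z)η(5z))⁴ / (η(2z)η(10z))⁴`, so that `j₁₀* = t + 4 + 16/t`. -/
noncomputable def etaQuotientTen (z : ℂ) : ℂ := etaProductFive z / etaProductFive (2 * z)

lemma jnStar_ten (z : ℂ) : jnStar 10 z = etaQuotientTen z + 4 + 16 / etaQuotientTen z := by
  rw [jnStar, if_neg (by norm_num), if_pos rfl, etaQuotientTen, etaProductFive, etaProductFive,
    ← mul_assoc, show (5 * 2 : ℂ) = 10 by norm_num, ← div_pow, div_eq_mul_inv (16 : ℂ), ← inv_pow,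
    inv_div]
  norm_num

lemma intCast_mul_add_intCast_ne_zero {c d : ℤ} (h : IsCoprime c d) {z : ℂ} (hz : 0 < z.im) :
    c * z + d ≠ 0 := by
  simpa using UpperHalfPlane.linear_ne_zero ⟨z, hz⟩
    (IsCoprime.ne_zero (p := ![(c : ℝ), d]) h.intCast)

lemma etaProductFive_mul_atkinLehner {p q r s : ℕ} (hp : p ≠ 0) (hrs : r * s = 5) {x y v w : ℤ}
    (h : p * r * x * w - q * s * y * v = 1) {z : ℂ} (hz : 0 < z.im) :
    etaProductFive (p * ((p * r * x * z + y) / (p * r * (q * s * v * z + w)))) =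
      r ^ 2 * (q * s * v * z + w) ^ 4 * etaProductFive z := by
  have key := etaProductFive_atkinLehner hrs (a := p * x) (b := y) (c := q * v) (d := w)
    (by linear_combination h) hz
  push_cast at key
  convert key using 2
  · have : (p : ℂ) ≠ 0 := Nat.cast_ne_zero.2 hp
    field_simp
  · ring

theorem jnStar_ten_atkinLehner {p q r s : ℕ} (hpq : p * q = 2) (hrs : r * s = 5) {x y v w : ℤ}
    (h : p * r * x * w - q * s * y * v = 1) {z : ℂ} (hz : 0 < z.im) :
    jnStar 10 ((p * r * x * z + y) / (p * r * (q * s * v * z + w))) = jnStar 10 z := by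
  set z' := (p * r * x * z + y) / (p * r * (q * s * v * z + w)) with hz'
  have hp : p ≠ 0 := left_ne_zero_of_mul (hpq ▸ two_ne_zero)
  have hr : (r : ℂ) ≠ 0 := Nat.cast_ne_zero.2 (by rintro rfl; simp at hrs)
  have hlin : q * s * v * z + w ≠ 0 := by
    exact_mod_cast intCast_mul_add_intCast_ne_zero (c := q * s * v)
      ⟨-y, p * r * x, by linear_combination h⟩ hz
  have hP := etaProductFive_ne_zero hz
  have hz2 : 0 < (2 * z).im := im_natCast_mul_pos two_ne_zero hz
  have hP2 := etaProductFive_ne_zero hz2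
  have hPp : etaProductFive (p * z') = r ^ 2 * (q * s * v * z + w) ^ 4 * etaProductFive z :=
    etaProductFive_mul_atkinLehner hp hrs h hz
  have hPq : etaProductFive (q * z') =
      r ^ 2 * (p * (q * s * v * z + w)) ^ 4 * etaProductFive (2 * z) := by
    have hpqC : (p * q : ℂ) = 2 := by exact_mod_cast hpq
    have key := etaProductFive_atkinLehner hrs (a := x) (b := q * y) (c := v) (d := p * w)
      (by linear_combination h) hz2
    push_cast at key
    convert key using 2
    · rw [hz', ← hpqC]; field_simp
    · rw [← hpqC]; ring
  rw [jnStar_ten, jnStar_ten, etaQuotientTen, etaQuotientTen]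
  obtain rfl | rfl := (Nat.dvd_prime Nat.prime_two).1 (Dvd.intro q hpq)
  · obtain rfl : q = 2 := by omega
    simp only [Nat.cast_one, one_mul, Nat.cast_ofNat] at hPp hPq hlin
    rw [hPp, hPq]
    field_simp
  · obtain rfl : q = 1 := by omega
    simp only [Nat.cast_one, one_mul, Nat.cast_ofNat] at hPp hPq hlin
    rw [hPp, hPq]
    field_simp
    ring

theorem jnStar_ten_threeAddI_div_ten : jnStar 10 ((3 + Complex.I) / 10) = -4 := by
  set α := (3 + Complex.I) / 10 with hα
  have him : 0 < (2 * α).im := by simp [hα]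
  have hP : etaProductFive α = -4 * etaProductFive (2 * α) := by
    have key := etaProductFive_atkinLehner (one_mul 5) (a := 2) (b := -1) (c := 1) (d := -2)
      (by norm_num) him
    have hlin : (5 * (2 * α) - 2 : ℂ) = 1 + Complex.I := by rw [hα]; ring
    have hne : 1 + Complex.I ≠ 0 := fun h0 => by simpa using congrArg Complex.re h0
    have hfix : (2 * (2 * α) - 1) / (1 + Complex.I) = α := by
      rw [div_eq_iff hne, hα]
      linear_combination -(1 / 10 : ℂ) * Complex.I_sq
    have hpow : (1 + Complex.I) ^ 4 = -4 := by
      linear_combination (Complex.I ^ 2 + 4 * Complex.I + 5) * Complex.I_sq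
    norm_num [← sub_eq_add_neg, hlin, hfix, hpow] at key
    rw [key, neg_mul]
  have ht : etaQuotientTen α = -4 := by
    rw [etaQuotientTen, hP, mul_div_cancel_right₀ _ (etaProductFive_ne_zero him)]
  rw [jnStar_ten, ht]
  norm_num

end LevelTen

section FrickeGroup

lemma sqrt_inv_mul_sqrt_inv_of_common_factor (d e f : ℕ) :
    (Real.sqrt (d * e : ℕ))⁻¹ * (Real.sqrt (d * f : ℕ))⁻¹ =
      (Real.sqrt (e * f : ℕ))⁻¹ * (d : ℝ)⁻¹ := by
  rw [← mul_inv, ← mul_inv, ← Real.sqrt_mul (by positivity)]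
  congr 1
  rw [show ((d * e : ℕ) : ℝ) * (d * f : ℕ) = (e * f : ℕ) * (d : ℝ) ^ 2 by push_cast; ring,
    Real.sqrt_mul (by positivity), Real.sqrt_sq (by positivity)]

lemma mul_mem_atkinLehnerSet {d e f k : ℕ} (hd : d ≠ 0) {g g' : SL2R}
    (hg : g ∈ atkinLehnerSet (d * e * f * k) (d * e))
    (hg' : g' ∈ atkinLehnerSet (d * e * f * k) (d * f)) :
    g * g' ∈ atkinLehnerSet (d * e * f * k) (e * f) := by
  obtain ⟨x, y, z, w, hg⟩ := hg
  obtain ⟨x', y', z', w', hg'⟩ := hg'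
  have hd0 : (d : ℝ) ≠ 0 := Nat.cast_ne_zero.2 hd
  refine ⟨x * x' * d + k * y * z', x * y' * e + y * w' * f, z * x' * f + w * z' * e,
    w * w' * d + k * z * y', ?_⟩
  rw [Matrix.SpecialLinearGroup.coe_mul, hg, hg', Matrix.smul_mul, Matrix.mul_smul, smul_smul,
    sqrt_inv_mul_sqrt_inv_of_common_factor, mul_smul]
  congr 1
  rw [inv_smul_eq_iff₀ hd0, Matrix.mul_fin_two, Matrix.smul_of]
  simp only [smul_cons, smul_empty, smul_eq_mul, EmbeddingLike.apply_eq_iff_eq, vecCons_inj,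
    and_true]
  push_cast
  refine ⟨⟨?_, ?_⟩, ?_, ?_⟩ <;> ring

lemma inv_mem_atkinLehnerSet {N e : ℕ} {g : SL2R} (hg : g ∈ atkinLehnerSet N e) :
    g⁻¹ ∈ atkinLehnerSet N e := by
  obtain ⟨x, y, z, w, hg⟩ := hg
  refine ⟨w, -y, -z, x, ?_⟩
  rw [Matrix.SpecialLinearGroup.coe_inv, hg, Matrix.adjugate_fin_two]
  ext i j
  fin_cases i <;> fin_cases j <;> simp

lemma Gamma0SL2R_subset_atkinLehnerSet (N : ℕ) :
    (Gamma0SL2R N : Set SL2R) ⊆ atkinLehnerSet N 1 := by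
  rintro _ ⟨γ, hγ, rfl⟩
  obtain ⟨z, hz⟩ := (ZMod.intCast_zmod_eq_zero_iff_dvd _ N).mp
    (CongruenceSubgroup.Gamma0_mem.mp hγ)
  refine ⟨γ 0 0, γ 0 1, z, γ 1 1, ?_⟩
  ext i j
  fin_cases i <;> fin_cases j <;> simp [hz, mul_comm]

lemma exists_common_factor_of_dvd {e f N : ℕ} (hN : N ≠ 0) (he : e ∣ N) (hf : f ∣ N) :
    ∃ d e' f' k : ℕ, d ≠ 0 ∧ e = d * e' ∧ f = d * f' ∧ N = d * e' * f' * k := by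
  have hd : e.gcd f ≠ 0 := Nat.gcd_ne_zero_left (ne_zero_of_dvd_ne_zero hN he)
  obtain ⟨e', f', hcop, he', hf'⟩ := Nat.exists_coprime e f
  generalize e.gcd f = d at *
  subst he' hf'
  obtain ⟨M, rfl⟩ := dvd_of_mul_left_dvd he
  rw [mul_comm _ d] at he hf
  obtain ⟨k, rfl⟩ := hcop.mul_dvd_of_dvd_of_dvd (Nat.dvd_of_mul_dvd_mul_left (by positivity) he)
    (Nat.dvd_of_mul_dvd_mul_left (by positivity) hf)
  exact ⟨d, e', f', k, hd, mul_comm .., mul_comm .., by ring⟩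

/-- With `d = gcd(e, f)`, the product of `W_e` and `W_f` is some `W_{ef/d²}`. -/
theorem exists_mem_atkinLehnerSet_of_mem_frickeGroup {N : ℕ} (hN : N ≠ 0) {g : SL2R}
    (hg : g ∈ FrickeGroup N) : ∃ e, e ∣ N ∧ g ∈ atkinLehnerSet N e := by
  induction hg using Subgroup.closure_induction with
  | mem g hg =>
    rcases hg with hg | hg
    · exact ⟨1, one_dvd _, Gamma0SL2R_subset_atkinLehnerSet N hg⟩
    · simp only [Set.mem_iUnion] at hg
      obtain ⟨e, he, hg⟩ := hg
      exact ⟨e, he.1, hg⟩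
  | one => exact ⟨1, one_dvd _, Gamma0SL2R_subset_atkinLehnerSet N (one_mem _)⟩
  | mul g g' _ _ ih ih' =>
    obtain ⟨e, he, hg⟩ := ih
    obtain ⟨f, hf, hg'⟩ := ih'
    obtain ⟨d, e', f', k, hd, rfl, rfl, rfl⟩ := exists_common_factor_of_dvd hN he hf
    exact ⟨e' * f', ⟨d * k, by ring⟩, mul_mem_atkinLehnerSet hd hg hg'⟩
  | inv g _ ih =>
    obtain ⟨e, he, hg⟩ := ih
    exact ⟨e, he, inv_mem_atkinLehnerSet hg⟩

theorem exists_int_matrix_of_mem_frickeGroup {N : ℕ} (hN : N ≠ 0) {g : SL2R}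
    (hg : g ∈ FrickeGroup N) : ∃ (e : ℕ) (x y z w : ℤ), e ≠ 0 ∧ e ∣ N ∧
      x * w * e ^ 2 - y * z * N = e ∧
      g.1 = (Real.sqrt e)⁻¹ • !![(x : ℝ) * e, (y : ℝ); (z : ℝ) * N, (w : ℝ) * e] := by
  obtain ⟨e, he, x, y, z, w, hg⟩ := exists_mem_atkinLehnerSet_of_mem_frickeGroup hN hg
  have he0 : e ≠ 0 := ne_zero_of_dvd_ne_zero hN he
  have he0' : (e : ℝ) ≠ 0 := Nat.cast_ne_zero.2 he0
  refine ⟨e, x, y, z, w, he0, he, ?_, hg⟩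
  have hdet := g.2
  rw [hg, Matrix.det_smul, Matrix.det_fin_two_of, Fintype.card_fin, inv_pow,
    Real.sq_sqrt (by positivity), inv_mul_eq_one₀ he0'] at hdet
  have h : (x * w * e ^ 2 - y * z * N : ℝ) = e := by linear_combination -hdet
  exact_mod_cast h

theorem exists_mem_frickeGroup_eq_smul {N e : ℕ} (he : e ≠ 0) (heN : e ∣ N)
    (hcop : Nat.Coprime e (N / e)) {A B C D : ℤ} (hdet : A * D - B * C = e) (hA : (e : ℤ) ∣ A)
    (hC : (N : ℤ) ∣ C) (hD : (e : ℤ) ∣ D) :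
    ∃ g ∈ FrickeGroup N, g.1 = (Real.sqrt e)⁻¹ • !![(A : ℝ), (B : ℝ); (C : ℝ), (D : ℝ)] := by
  have he0 : (e : ℝ) ≠ 0 := Nat.cast_ne_zero.2 he
  have hdetR : (A * D - B * C : ℝ) = e := by exact_mod_cast hdet
  have hone : ((Real.sqrt e)⁻¹ • !![(A : ℝ), (B : ℝ); (C : ℝ), (D : ℝ)]).det = 1 := by
    rw [Matrix.det_smul, Matrix.det_fin_two_of, hdetR, Fintype.card_fin, inv_pow,
      Real.sq_sqrt (by positivity), inv_mul_cancel₀ he0]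
  obtain ⟨x, rfl⟩ := hA
  obtain ⟨z, rfl⟩ := hC
  obtain ⟨w, rfl⟩ := hD
  exact ⟨⟨_, hone⟩,
    Subgroup.subset_closure (.inr (Set.mem_biUnion ⟨heN, hcop⟩ ⟨x, B, z, w, by simp [mul_comm]⟩)),
    rfl⟩

theorem jnStar_ten_frickeGroup_smul {g : SL2R} (hg : g ∈ FrickeGroup 10) (τ : UpperHalfPlane) :
    jnStar 10 ↑(g • τ) = jnStar 10 τ := by
  obtain ⟨e, x, y, v, w, he, hdvd, hdet, hg⟩ :=
    exists_int_matrix_of_mem_frickeGroup (by norm_num) hg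
  obtain ⟨p, r, ⟨q, hq⟩, ⟨s, hs⟩, rfl⟩ := (Nat.dvd_mul (m := 2) (n := 5)).1 hdvd
  have hdet' : p * r * x * w - q * s * y * v = 1 := by
    have hten : ((10 : ℕ) : ℤ) = (p * q) * (r * s) := by exact_mod_cast congrArg₂ (· * ·) hq hs
    have hpr : ((p * r : ℕ) : ℤ) ≠ 0 := by exact_mod_cast he
    apply mul_left_cancel₀ hpr
    rw [hten] at hdet
    push_cast at hdet ⊢
    linear_combination hdet
  have hsqrt : (Real.sqrt (p * r : ℕ) : ℂ)⁻¹ ≠ 0 := by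
    exact_mod_cast inv_ne_zero (Real.sqrt_pos.2 (by positivity)).ne'
  have hten : (10 : ℂ) = (p * q) * (r * s) := by exact_mod_cast congrArg₂ (· * ·) hq hs
  rw [← jnStar_ten_atkinLehner hq.symm hs.symm hdet' τ.2,
    UpperHalfPlane.coe_specialLinearGroup_apply, hg,
    ← mul_div_mul_left _ (p * r * (q * s * v * τ + w) : ℂ) hsqrt]
  congr 2
  · simp only [Matrix.smul_apply, of_apply, cons_val', cons_val_zero, cons_val_one,
      cons_val_fin_one, smul_eq_mul, Real.ringHom_apply, Algebra.algebraMap_self]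
    push_cast
    ring
  · simp only [Matrix.smul_apply, of_apply, cons_val', cons_val_zero, cons_val_one,
      cons_val_fin_one, smul_eq_mul, Real.ringHom_apply, Algebra.algebraMap_self]
    push_cast
    rw [hten]
    ring

end FrickeGroup

section CMPoints

lemma formMat_posDef {a b c : ℤ} (ha : 0 < a) (h : b ^ 2 - 4 * a * c < 0) :
    (formMat a b c).PosDef := by
  have ha' : (0 : ℝ) < a := by exact_mod_cast ha
  have h' : (b ^ 2 - 4 * a * c : ℝ) < 0 := by exact_mod_cast h
  refine Matrix.PosDef.of_dotProduct_mulVec_pos ?_ fun v hv => ?_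
  · ext i j
    fin_cases i <;> fin_cases j <;> simp [formMat]
  · have hsq : 4 * a * (star v ⬝ᵥ formMat a b c *ᵥ v) =
        (2 * a * v 0 + b * v 1) ^ 2 + (4 * a * c - b ^ 2) * v 1 ^ 2 := by
      simp only [formMat, dotProduct, mulVec, Fin.sum_univ_two, Pi.star_apply, star_trivial,
        of_apply, cons_val', cons_val_zero, cons_val_one, cons_val_fin_one]
      ring
    suffices 0 < (2 * a * v 0 + b * v 1) ^ 2 + (4 * a * c - b ^ 2) * v 1 ^ 2 from
      pos_of_mul_pos_right (hsq ▸ this) (mul_pos four_pos ha').le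
    rcases eq_or_ne (v 1) 0 with h1 | h1
    · have h0 : v 0 ≠ 0 := fun h0 => hv (by ext i; fin_cases i <;> assumption)
      have : 0 < (2 * a * v 0) ^ 2 := by positivity
      simpa [h1] using this
    · have := mul_pos (by linarith : 0 < 4 * a * c - (b : ℝ) ^ 2) (sq_pos_of_ne_zero h1)
      positivity

lemma cmPointC_im_pos {M : Matrix (Fin 2) (Fin 2) ℝ} (hM : M.PosDef) : 0 < (cmPointC M).im := by
  rw [cmPointC, div_ofReal_im]
  simpa using div_pos (Real.sqrt_pos.2 hM.det_pos) (hM.diag_pos (i := 0))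

lemma cmPointC_eq_iff {M : Matrix (Fin 2) (Fin 2) ℝ} (hM : M.PosDef) {z : ℂ} (hz : 0 < z.im) :
    cmPointC M = z ↔ M 0 0 * z ^ 2 + 2 * M 0 1 * z + M 1 1 = 0 := by
  have ha : (0 : ℝ) < M 0 0 := hM.diag_pos
  have ha' : (M 0 0 : ℂ) ≠ 0 := by exact_mod_cast ha.ne'
  have hsymm : M 1 0 = M 0 1 := by simpa using hM.isHermitian.apply 0 1
  have hsqrt : (Real.sqrt M.det : ℂ) ^ 2 = M 0 0 * M 1 1 - M 0 1 ^ 2 := by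
    have : (Real.sqrt M.det) ^ 2 = M 0 0 * M 1 1 - M 0 1 ^ 2 := by
      rw [Real.sq_sqrt hM.det_pos.le, Matrix.det_fin_two, hsymm, sq]
    exact_mod_cast this
  have hfactor : (M 0 0 : ℂ) * (M 0 0 * z ^ 2 + 2 * M 0 1 * z + M 1 1) =
      (M 0 0 * z + M 0 1 - Complex.I * Real.sqrt M.det) *
        (M 0 0 * z + M 0 1 + Complex.I * Real.sqrt M.det) := by
    linear_combination Complex.I ^ 2 * hsqrt + (M 0 0 * M 1 1 - M 0 1 ^ 2 : ℂ) * Complex.I_sq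
  have hne : M 0 0 * z + M 0 1 + Complex.I * Real.sqrt M.det ≠ 0 := by
    intro h
    have him : M 0 0 * z.im + Real.sqrt M.det = 0 := by simpa using congrArg Complex.im h
    have := mul_pos ha hz
    linarith [Real.sqrt_nonneg M.det]
  rw [← mul_eq_zero_iff_left ha', hfactor, mul_eq_zero_iff_right hne, cmPointC, div_eq_iff ha']
  push_cast
  constructor <;> intro h <;> linear_combination -h

lemma cmPointC_formMat_ten_neg_six_one : cmPointC (formMat 10 (-6) 1) = (3 + Complex.I) / 10 := by
  norm_num [cmPointC, formMat, Matrix.det_fin_two_of]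

/-- The root `α_Q` in the upper half-plane of the form with positive definite Gram matrix `M`:
`cmPointC M` bundled as a point of `ℍ`, so that `SL(2, ℝ)` acts on it. -/
noncomputable def cmPoint {M : Matrix (Fin 2) (Fin 2) ℝ} (hM : M.PosDef) : UpperHalfPlane :=
  ⟨cmPointC M, cmPointC_im_pos hM⟩

lemma cmPoint_eq_iff {M : Matrix (Fin 2) (Fin 2) ℝ} (hM : M.PosDef) {τ : UpperHalfPlane} :
    cmPoint hM = τ ↔ M 0 0 * (τ : ℂ) ^ 2 + 2 * M 0 1 * τ + M 1 1 = 0 :=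
  UpperHalfPlane.ext_iff.trans (cmPointC_eq_iff hM τ.im_pos)

lemma posDef_transpose_mul_mul {M : Matrix (Fin 2) (Fin 2) ℝ} (hM : M.PosDef) (g : SL2R) :
    ((g.1)ᵀ * M * g.1).PosDef := by
  rw [← conjTranspose_eq_transpose_of_trivial]
  exact hM.conjTranspose_mul_mul_same (Matrix.mulVec_injective_iff_isUnit.2
    ((Matrix.isUnit_iff_isUnit_det _).2 (by simp [g.2])))

theorem smul_cmPoint_transpose_mul_mul {M : Matrix (Fin 2) (Fin 2) ℝ} (hM : M.PosDef) (g : SL2R) :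
    g • cmPoint (posDef_transpose_mul_mul hM g) = cmPoint hM := by
  have hroot := (cmPoint_eq_iff (posDef_transpose_mul_mul hM g)).1 rfl
  have hsymm : M 1 0 = M 0 1 := by simpa using hM.isHermitian.apply 0 1
  symm
  generalize cmPoint _ = τ at hroot ⊢
  have hden : (g.1 1 0 * τ + g.1 1 1 : ℂ) ≠ 0 :=
    UpperHalfPlane.denom_ne_zero (g : GL (Fin 2) ℝ) τ
  have hsmul : ((g • τ : UpperHalfPlane) : ℂ) =
      (g.1 0 0 * τ + g.1 0 1) / (g.1 1 0 * τ + g.1 1 1) :=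
    UpperHalfPlane.coe_specialLinearGroup_apply g τ
  have hnum : M 0 0 * (g.1 0 0 * τ + g.1 0 1 : ℂ) ^ 2 +
      2 * M 0 1 * (g.1 0 0 * τ + g.1 0 1) * (g.1 1 0 * τ + g.1 1 1) +
      M 1 1 * (g.1 1 0 * τ + g.1 1 1) ^ 2 = 0 := by
    simp only [Matrix.mul_apply, transpose_apply, Fin.sum_univ_two, hsymm] at hroot
    push_cast at hroot
    linear_combination hroot
  rw [cmPoint_eq_iff, hsmul]
  generalize (g.1 0 0 * τ + g.1 0 1 : ℂ) = z, (g.1 1 0 * τ + g.1 1 1 : ℂ) = w at hden hnum ⊢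
  field_simp
  linear_combination hnum

end CMPoints

section FormOrbits

lemma transpose_mul_mul_mul (g h : SL2R) (M : Matrix (Fin 2) (Fin 2) ℝ) :
    ((g * h).1)ᵀ * M * (g * h).1 = (h.1)ᵀ * ((g.1)ᵀ * M * g.1) * h.1 := by
  simp only [Matrix.SpecialLinearGroup.coe_mul, Matrix.transpose_mul, Matrix.mul_assoc]

lemma transpose_mul_mul_injective (g : SL2R) :
    Function.Injective fun M : Matrix (Fin 2) (Fin 2) ℝ => (g.1)ᵀ * M * g.1 :=
  Function.LeftInverse.injective (g := fun M => ((g⁻¹).1)ᵀ * M * (g⁻¹).1) fun M => by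
    simp only [← transpose_mul_mul_mul, mul_inv_cancel, Matrix.SpecialLinearGroup.coe_one,
      Matrix.transpose_one, Matrix.one_mul, Matrix.mul_one]

/-- The stabilizer in `Γ` of the form with Gram matrix `M`, under `M ↦ gᵀ M g`; in contrast to
`stabOrder` the elements `±1` are not divided out. -/
def formStabilizer (Γ : Subgroup SL2R) (M : Matrix (Fin 2) (Fin 2) ℝ) : Subgroup SL2R where
  carrier := { g | g ∈ Γ ∧ (g.1)ᵀ * M * g.1 = M }
  one_mem' := ⟨one_mem Γ, by simp⟩
  mul_mem' hg hh := ⟨mul_mem hg.1 hh.1, by rw [transpose_mul_mul_mul, hg.2, hh.2]⟩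
  inv_mem' {g} hg := ⟨inv_mem hg.1, transpose_mul_mul_injective g (by
    simp only [← transpose_mul_mul_mul, inv_mul_cancel]
    simp [hg.2])⟩

lemma stabOrder_eq_card_formStabilizer (Γ : Subgroup SL2R) (M : Matrix (Fin 2) (Fin 2) ℝ) :
    stabOrder Γ M = Nat.card (formStabilizer Γ M) / 2 := rfl

lemma stabOrder_transpose_mul_mul {Γ : Subgroup SL2R} (M : Matrix (Fin 2) (Fin 2) ℝ) {k : SL2R}
    (hk : k ∈ Γ) : stabOrder Γ ((k.1)ᵀ * M * k.1) = stabOrder Γ M := by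
  have hstab : ∀ g : SL2R, g ∈ formStabilizer Γ M ↔
      k⁻¹ * g * k ∈ formStabilizer Γ ((k.1)ᵀ * M * k.1) := fun g => by
    refine and_congr ?_ ?_
    · rw [Γ.mul_mem_cancel_right hk, Γ.mul_mem_cancel_left (Γ.inv_mem hk)]
    · have hk' : k * (k⁻¹ * g * k) = g * k := by group
      rw [← transpose_mul_mul_mul, hk', transpose_mul_mul_mul]
      exact (transpose_mul_mul_injective k).eq_iff.symm
  rw [stabOrder_eq_card_formStabilizer, stabOrder_eq_card_formStabilizer]
  congr 1
  exact Nat.card_congr ((MulAut.conj k⁻¹).toEquiv.subtypeEquiv fun g => by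
    simpa using hstab g).symm

theorem classTrace_eq_of_forall_exists_transpose_mul_mul {Γ : Subgroup SL2R} {f : ℂ → ℂ}
    {S : Set (Matrix (Fin 2) (Fin 2) ℝ)} {M : Matrix (Fin 2) (Fin 2) ℝ} (hM : M.PosDef)
    (hMS : M ∈ S) (horbit : ∀ Q ∈ S, ∃ g ∈ Γ, Q = (g.1)ᵀ * M * g.1)
    (hf : ∀ g ∈ Γ, ∀ τ : UpperHalfPlane, f ↑(g • τ) = f τ) :
    classTrace Γ f S = f (cmPointC M) / stabOrder Γ M := by
  have hequiv : ∀ Q : S, Quot.mk (formRel Γ S) ⟨M, hMS⟩ = Quot.mk (formRel Γ S) Q :=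
    fun Q => Quot.sound (horbit Q Q.2)
  let _ : Unique (Quot (formRel Γ S)) :=
    { default := Quot.mk _ ⟨M, hMS⟩, uniq := Quot.ind fun Q => (hequiv Q).symm }
  obtain ⟨g, hg, hQ⟩ := horbit _ (Quot.out (default : Quot (formRel Γ S))).2
  have hvalue : f (cmPointC ((g.1)ᵀ * M * g.1)) = f (cmPointC M) := by
    have := hf g hg (cmPoint (posDef_transpose_mul_mul hM g))
    rw [smul_cmPoint_transpose_mul_mul hM] at this
    exact this.symm
  rw [classTrace, finsum_unique, hQ, hvalue, stabOrder_transpose_mul_mul M hg]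

end FormOrbits

section SingleOrbit

lemma exists_sum_two_squares_of_det_eq_one {a β c : ℤ} (ha : 0 < a) (h : a * c - β ^ 2 = 1) :
    ∃ p q r s : ℤ, a = p ^ 2 + q ^ 2 ∧ β = p * r + q * s ∧ c = r ^ 2 + s ^ 2 ∧
      p * s - q * r = 1 := by
  induction hn : a.toNat using Nat.strong_induction_on generalizing a β c with
  | _ n ih =>
    obtain rfl | ha1 : a = 1 ∨ 1 < a := by omega
    · exact ⟨1, 0, β, 1, by norm_num, by ring, by linarith, by norm_num⟩
    · -- One step of Gauss reduction: translate `β` into `[0, a)`, then swap the two variables.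
      set ρ := β % a
      set k := β / a
      have hβ : β = ρ + a * k := (Int.emod_add_mul_ediv β a).symm
      have hρ : 0 ≤ ρ := Int.emod_nonneg _ ha.ne'
      have hρa : ρ < a := Int.emod_lt_of_pos _ ha
      have hdet : (c - 2 * k * β + k ^ 2 * a) * a - (-ρ) ^ 2 = 1 := by
        linear_combination h + (β + ρ - a * k) * hβ
      have hpos : 0 < c - 2 * k * β + k ^ 2 * a := by nlinarith
      have hlt : c - 2 * k * β + k ^ 2 * a < a := by nlinarith
      obtain ⟨p, q, r, s, h1, h2, h3, h4⟩ := ih _ (by omega) hpos hdet rfl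
      refine ⟨r, s, k * r - p, k * s - q, h3, ?_, ?_, ?_⟩
      · linear_combination hβ - h2 + k * h3
      · linear_combination h1 - 2 * k * h2 + 2 * k * hβ + k ^ 2 * h3
      · linear_combination h4

lemma exists_eq_of_mem_QdN_four {N : ℕ} {Q : Matrix (Fin 2) (Fin 2) ℝ} (hQ : Q ∈ QdN 4 N) :
    ∃ a β c : ℤ, 0 < a ∧ a * c - β ^ 2 = 1 ∧ (N : ℤ) ∣ a ∧
      Q = !![(a : ℝ), (β : ℝ); (β : ℝ), (c : ℝ)] := by
  obtain ⟨a, b, c, rfl, ha, hdisc, hdvd⟩ := hQ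
  obtain ⟨β, rfl⟩ : Even b := by
    have : Even (b ^ 2) := ⟨2 * a * c - 2, by linarith⟩
    exact (Int.even_pow.1 this).1
  exact ⟨a, β, c, ha, by linarith, hdvd, by simp [formMat]⟩

/-- The base form is `10X² - 6XY + Y² = X² + (3X - Y)²`. -/
lemma transpose_mul_formMat_ten_mul {e : ℝ} (he : 0 ≤ e) (A B C D : ℝ) :
    ((Real.sqrt e)⁻¹ • !![A, B; C, D])ᵀ * formMat 10 (-6) 1 * ((Real.sqrt e)⁻¹ • !![A, B; C, D]) =
      e⁻¹ • !![A ^ 2 + (3 * A - C) ^ 2, A * B + (3 * A - C) * (3 * B - D);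
        A * B + (3 * A - C) * (3 * B - D), B ^ 2 + (3 * B - D) ^ 2] := by
  rw [Matrix.transpose_smul, Matrix.smul_mul, Matrix.mul_smul, Matrix.smul_mul, smul_smul,
    ← mul_inv, Real.mul_self_sqrt he]
  congr 1
  ext i j
  fin_cases i <;> fin_cases j <;>
    simp only [formMat, Matrix.mul_apply, transpose_apply, Fin.sum_univ_two, of_apply, cons_val',
      cons_val_zero, cons_val_one, cons_val_fin_one, Fin.zero_eta, Fin.mk_one] <;>
    push_cast <;> ring

/-- Since `10 = (1 + i)(1 - i)(2 + i)(2 - i)`, this sorts the `p + qi` of norm divisible by `10`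
according to their factor of norm `5`. -/
lemma dvd_of_ten_dvd_sq_add_sq {p q : ℤ} (h : 10 ∣ p ^ 2 + q ^ 2) :
    10 ∣ 3 * q - p ∨ 5 ∣ p - 2 * q ∧ 2 ∣ p - q := by
  have key : ∀ p q : ZMod 10, p ^ 2 + q ^ 2 = 0 →
      3 * q - p = 0 ∨ 2 * (p - 2 * q) = 0 ∧ 5 * (p - q) = 0 := by decide
  have hcast := key p q
  norm_cast at hcast
  simp only [ZMod.intCast_zmod_eq_zero_iff_dvd] at hcast
  have := hcast h
  omega

lemma exists_mem_frickeGroup_ten_of_sum_two_squares {e : ℕ} (he : e ≠ 0) (hdvd : e ∣ 10)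
    (hcop : Nat.Coprime e (10 / e)) {A B C D a β c : ℤ} (hdet : A * D - B * C = e)
    (hA : (e : ℤ) ∣ A) (hC : 10 ∣ C) (hD : (e : ℤ) ∣ D)
    (ha : A ^ 2 + (3 * A - C) ^ 2 = e * a) (hβ : A * B + (3 * A - C) * (3 * B - D) = e * β)
    (hc : B ^ 2 + (3 * B - D) ^ 2 = e * c) :
    ∃ g ∈ FrickeGroup 10,
      !![(a : ℝ), (β : ℝ); (β : ℝ), (c : ℝ)] = (g.1)ᵀ * formMat 10 (-6) 1 * g.1 := by
  obtain ⟨g, hg, hgm⟩ := exists_mem_frickeGroup_eq_smul he hdvd hcop hdet hA hC hD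
  have ha' : (A ^ 2 + (3 * A - C) ^ 2 : ℝ) = e * a := by exact_mod_cast ha
  have hβ' : (A * B + (3 * A - C) * (3 * B - D) : ℝ) = e * β := by exact_mod_cast hβ
  have hc' : (B ^ 2 + (3 * B - D) ^ 2 : ℝ) = e * c := by exact_mod_cast hc
  refine ⟨g, hg, ?_⟩
  rw [hgm, transpose_mul_formMat_ten_mul e.cast_nonneg, ha', hβ', hc']
  simp [he]

theorem exists_mem_frickeGroup_ten_of_mem_QdN_four {Q : Matrix (Fin 2) (Fin 2) ℝ}
    (hQ : Q ∈ QdN 4 10) :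
    ∃ g ∈ FrickeGroup 10, Q = (g.1)ᵀ * formMat 10 (-6) 1 * g.1 := by
  obtain ⟨a, β, c, ha, h, hdvd, rfl⟩ := exists_eq_of_mem_QdN_four hQ
  obtain ⟨p, q, r, s, rfl, rfl, rfl, hdet⟩ := exists_sum_two_squares_of_det_eq_one ha h
  rcases dvd_of_ten_dvd_sq_add_sq hdvd with h10 | ⟨h5, h2⟩
  · exact exists_mem_frickeGroup_ten_of_sum_two_squares (e := 1) (A := q) (B := s)
      (C := 3 * q - p) (D := 3 * s - r) one_ne_zero (by norm_num) (by norm_num)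
      (by push_cast; linear_combination hdet) (by simp) h10 (by simp) (by push_cast; ring)
      (by push_cast; ring) (by push_cast; ring)
  · exact exists_mem_frickeGroup_ten_of_sum_two_squares (e := 5) (A := p - 2 * q)
      (B := r - 2 * s) (C := 5 * (p - q)) (D := 5 * (r - s)) (by norm_num) (by norm_num)
      (by norm_num) (by push_cast; linear_combination 5 * hdet) (by exact_mod_cast h5)
      (mul_dvd_mul_left 5 h2) (by simp) (by push_cast; ring) (by push_cast; ring)
      (by push_cast; ring)

end SingleOrbit

section Stabilizer

/-- The matrix by which the Gaussian integer `ζ`, scaled to the unit circle, acts on `ℝ²` as a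
rotation preserving the form `[10, -6, 1] = X² + (3X - Y)²`. -/
noncomputable def rotationTen (ζ : GaussianInt) : Matrix (Fin 2) (Fin 2) ℝ :=
  (Real.sqrt ζ.norm)⁻¹ •
    !![(ζ.re + 3 * ζ.im : ℝ), (-ζ.im : ℝ); (10 * ζ.im : ℝ), (ζ.re - 3 * ζ.im : ℝ)]

lemma rotationTen_mul (ζ ξ : GaussianInt) :
    rotationTen (ζ * ξ) = rotationTen ζ * rotationTen ξ := by
  have hnorm : (0 : ℝ) ≤ ζ.norm := by exact_mod_cast GaussianInt.norm_nonneg ζ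
  rw [rotationTen, rotationTen, rotationTen, Matrix.smul_mul, Matrix.mul_smul, smul_smul,
    Zsqrtd.norm_mul, Int.cast_mul, Real.sqrt_mul hnorm, mul_inv, Matrix.mul_fin_two, Zsqrtd.re_mul,
    Zsqrtd.im_mul]
  push_cast
  congr 3 <;> ring_nf

lemma rotationTen_natCast_mul {n : ℕ} (hn : n ≠ 0) (ζ : GaussianInt) :
    rotationTen (n * ζ) = rotationTen ζ := by
  have hn' : (n : ℝ) ≠ 0 := Nat.cast_ne_zero.2 hn
  have hone : rotationTen n = 1 := by
    ext i j
    fin_cases i <;> fin_cases j <;> simp [rotationTen, hn']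
  rw [rotationTen_mul, hone, Matrix.one_mul]

lemma rotationTen_one : rotationTen 1 = 1 := by
  ext i j
  fin_cases i <;> fin_cases j <;> simp [rotationTen]

lemma rotationTen_pow (ζ : GaussianInt) (k : ℕ) : rotationTen (ζ ^ k) = rotationTen ζ ^ k := by
  induction k with
  | zero => rw [pow_zero, pow_zero, rotationTen_one]
  | succ k ih => rw [pow_succ, pow_succ, rotationTen_mul, ih]

lemma transpose_rotationTen_mul {ζ : GaussianInt} (hζ : ζ ≠ 0) :
    (rotationTen ζ)ᵀ * formMat 10 (-6) 1 * rotationTen ζ = formMat 10 (-6) 1 := by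
  have hnorm : (0 : ℝ) < ζ.norm := by exact_mod_cast GaussianInt.norm_pos.2 hζ
  rw [rotationTen, transpose_mul_formMat_ten_mul hnorm.le, inv_smul_eq_iff₀ hnorm.ne',
    Zsqrtd.norm_def, formMat]
  ext i j
  fin_cases i <;> fin_cases j <;>
    simp only [Matrix.smul_apply, smul_eq_mul, of_apply, cons_val', cons_val_zero, cons_val_one,
      cons_val_fin_one, Fin.zero_eta, Fin.mk_one] <;>
    push_cast <;> ring

lemma apply_eq_of_transpose_mul_formMat_ten_mul {g : SL2R}
    (hg : (g.1)ᵀ * formMat 10 (-6) 1 * g.1 = formMat 10 (-6) 1) :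
    g.1 1 0 = -10 * g.1 0 1 ∧ g.1 1 1 = g.1 0 0 + 6 * g.1 0 1 := by
  have hlin : (g.1)ᵀ * formMat 10 (-6) 1 = formMat 10 (-6) 1 * g.1.adjugate := by
    calc (g.1)ᵀ * formMat 10 (-6) 1
        = (g.1)ᵀ * formMat 10 (-6) 1 * (g.1 * g.1.adjugate) := by
          rw [Matrix.mul_adjugate, g.2, one_smul, Matrix.mul_one]
      _ = formMat 10 (-6) 1 * g.1.adjugate := by rw [← Matrix.mul_assoc, hg]
  have h00 := congrFun (congrFun hlin 0) 0
  have h01 := congrFun (congrFun hlin 0) 1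
  simp only [formMat, Int.cast_ofNat, Int.cast_neg, Int.cast_one, Matrix.mul_apply,
    transpose_apply, of_apply, cons_val', cons_val_zero, cons_val_fin_one, Fin.sum_univ_two,
    cons_val_one, adjugate_fin_two] at h00 h01
  constructor <;> linarith

lemma eq_one_or_two_of_dvd_ten {e : ℕ} (he : e ∣ 10) {x y w : ℤ}
    (hdet : x * w * e ^ 2 + 10 * y ^ 2 = e) (hw : w * e = x * e + 6 * y) : e = 1 ∨ e = 2 := by
  have hdvd : ¬ 5 ∣ e := by
    rintro ⟨f, rfl⟩
    have h6y : (5 : ℤ) ∣ 6 * y :=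
      ⟨w * f - x * f, by push_cast at hw; linear_combination -hw⟩
    obtain ⟨t, rfl⟩ : 5 ∣ y := by omega
    have h25 : (25 : ℤ) ∣ (5 * f : ℕ) :=
      ⟨x * w * f ^ 2 + 10 * t ^ 2, by rw [← hdet]; push_cast; ring⟩
    have := h25.trans (Int.natCast_dvd_natCast.2 he)
    norm_num at this
  have := Nat.le_of_dvd (by norm_num) he
  interval_cases e <;> omega

lemma exists_eq_rotationTen_of_mem_formStabilizer {g : SL2R}
    (hg : g ∈ formStabilizer (FrickeGroup 10) (formMat 10 (-6) 1)) :
    ∃ ζ : GaussianInt, (ζ.norm = 1 ∨ ζ.norm = 2) ∧ g.1 = rotationTen ζ := by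
  obtain ⟨e, x, y, z, w, he, hdvd, hdet, hgm⟩ :=
    exists_int_matrix_of_mem_frickeGroup (by norm_num) hg.1
  have hsqrt : (Real.sqrt e)⁻¹ ≠ 0 := inv_ne_zero (Real.sqrt_pos.2 (by positivity)).ne'
  obtain ⟨h10, h11⟩ := apply_eq_of_transpose_mul_formMat_ten_mul hg.2
  simp only [hgm, Matrix.smul_apply, of_apply, cons_val', cons_val_zero, cons_val_fin_one,
    cons_val_one, smul_eq_mul] at h10 h11
  have hz : (z : ℝ) = -y :=
    mul_left_cancel₀ hsqrt (by push_cast at h10; linear_combination h10 / 10)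
  have hw : (w * e : ℝ) = x * e + 6 * y := mul_left_cancel₀ hsqrt (by linear_combination h11)
  obtain rfl : z = -y := by exact_mod_cast hz
  have hw' : w * e = x * e + 6 * y := by exact_mod_cast hw
  have hnorm : Zsqrtd.norm (d := -1) ⟨x * e + 3 * y, -y⟩ = e := by
    rw [Zsqrtd.norm_def]
    push_cast at hdet ⊢
    linear_combination hdet - x * e * hw'
  refine ⟨⟨x * e + 3 * y, -y⟩, ?_, ?_⟩
  · rw [hnorm]
    exact_mod_cast eq_one_or_two_of_dvd_ten hdvd (by linear_combination hdet) hw'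
  · rw [hgm, rotationTen, hnorm, hw]
    push_cast
    congr 3 <;> ring_nf

lemma exists_one_add_I_pow_eq {ζ : GaussianInt} (hζ : ζ.norm = 1 ∨ ζ.norm = 2) :
    ∃ k n : ℕ, n ≠ 0 ∧ (⟨1, 1⟩ : GaussianInt) ^ k = n * ζ := by
  obtain ⟨T, U⟩ := ζ
  rw [Zsqrtd.norm_def] at hζ
  dsimp only at hζ
  have hle : T * T + U * U ≤ 2 := by rcases hζ with h | h <;> linarith
  have hT : T ∈ Finset.Icc (-1) 1 := by rw [Finset.mem_Icc]; constructor <;> nlinarith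
  have hU : U ∈ Finset.Icc (-1) 1 := by rw [Finset.mem_Icc]; constructor <;> nlinarith
  have key : ∀ T ∈ Finset.Icc (-1 : ℤ) 1, ∀ U ∈ Finset.Icc (-1 : ℤ) 1, T * T - (-1) * U * U ≠ 0 →
      ∃ k n : Fin 9, n ≠ 0 ∧ (⟨1, 1⟩ : GaussianInt) ^ k.1 = n.1 * ⟨T, U⟩ := by decide
  obtain ⟨k, n, hn, h⟩ := key T hT U hU (by rcases hζ with h | h <;> rw [h] <;> norm_num)
  exact ⟨k, n, Fin.val_ne_zero_iff.2 hn, h⟩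

lemma exists_mem_frickeGroup_ten_eq_rotationTen :
    ∃ ρ ∈ FrickeGroup 10, ρ.1 = rotationTen ⟨1, 1⟩ := by
  obtain ⟨ρ, hρ, hρm⟩ := exists_mem_frickeGroup_eq_smul (N := 10) (e := 2) (A := 4) (B := -1)
    (C := 10) (D := -2) (by norm_num) (by norm_num) (by norm_num) (by norm_num) (by norm_num)
    (by norm_num) (by norm_num)
  refine ⟨ρ, hρ, ?_⟩
  rw [hρm, rotationTen, Zsqrtd.norm_def]
  norm_num

theorem formStabilizer_frickeGroup_ten_eq_zpowers {ρ : SL2R} (hρ : ρ ∈ FrickeGroup 10)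
    (hρm : ρ.1 = rotationTen ⟨1, 1⟩) :
    formStabilizer (FrickeGroup 10) (formMat 10 (-6) 1) = Subgroup.zpowers ρ := by
  apply le_antisymm
  · intro g hg
    obtain ⟨ζ, hζ, hgm⟩ := exists_eq_rotationTen_of_mem_formStabilizer hg
    obtain ⟨k, n, hn, hk⟩ := exists_one_add_I_pow_eq hζ
    refine Subgroup.mem_zpowers_iff.2 ⟨k, Subtype.ext ?_⟩
    rw [zpow_natCast, Matrix.SpecialLinearGroup.coe_pow, hρm, ← rotationTen_pow, hk,
      rotationTen_natCast_mul hn, hgm]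
  · rw [Subgroup.zpowers_le]
    refine ⟨hρ, ?_⟩
    rw [hρm, transpose_rotationTen_mul (by decide)]

lemma orderOf_eq_eight_of_eq_rotationTen {ρ : SL2R} (hρ : ρ.1 = rotationTen ⟨1, 1⟩) :
    orderOf ρ = 8 := by
  have hpow : ∀ {k n : ℕ} {ζ : GaussianInt}, n ≠ 0 → (⟨1, 1⟩ : GaussianInt) ^ k = n * ζ →
      (ρ ^ k).1 = rotationTen ζ := fun hn h => by
    rw [Matrix.SpecialLinearGroup.coe_pow, hρ, ← rotationTen_pow, h, rotationTen_natCast_mul hn]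
  refine orderOf_eq_prime_pow (p := 2) (n := 2) (fun h4 => ?_) (Subtype.ext ?_)
  · have h := hpow (k := 2 ^ 2) (n := 4) (ζ := -1) (by norm_num) (by decide)
    rw [h4] at h
    have h00 := congrFun (congrFun h 0) 0
    norm_num [rotationTen] at h00
  · rw [hpow (n := 16) (ζ := 1) (by norm_num) (by decide), rotationTen_one]
    rfl

theorem stabOrder_frickeGroup_ten : stabOrder (FrickeGroup 10) (formMat 10 (-6) 1) = 4 := by
  obtain ⟨ρ, hρ, hρm⟩ := exists_mem_frickeGroup_ten_eq_rotationTen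
  rw [stabOrder_eq_card_formStabilizer, formStabilizer_frickeGroup_ten_eq_zpowers hρ hρm,
    Nat.card_zpowers, orderOf_eq_eight_of_eq_rotationTen hρm]

end Stabilizer

lemma formMat_ten_neg_six_one_mem_QdN : formMat 10 (-6) 1 ∈ QdN 4 10 :=
  ⟨10, -6, 1, rfl, by norm_num, by norm_num, by norm_num⟩

theorem t2Star_ten_X_sq_sub_C_four :
    t2Star 10 (Polynomial.X ^ 2 - Polynomial.C 44) 4 = -7 := by
  have hQ : (formMat 10 (-6) 1).PosDef := formMat_posDef (by norm_num) (by norm_num)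
  rw [t2Star, if_pos (by norm_num),
    classTrace_eq_of_forall_exists_transpose_mul_mul hQ
      formMat_ten_neg_six_one_mem_QdN
      (fun Q => exists_mem_frickeGroup_ten_of_mem_QdN_four)
      (fun g hg τ => by simp only [jnStar_ten_frickeGroup_smul hg]),
    cmPointC_formMat_ten_neg_six_one, jnStar_ten_threeAddI_div_ten, stabOrder_frickeGroup_ten]
  norm_num

/-- **CM value at level 10.** `j₁₀*((3 + i)/10) = -4`; moreover `(3 + i)/10` is the CM point
of `Q = [10,-6,1]` of discriminant `-4`, whose class `𝒬_{4,10}/Γ₀*(10)` is a single orbit with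
`|Γ̄₀*(10)_Q| = 4`, and with `φ₂(j₁₀*) = (j₁₀*)² - 44` one gets
`t₂^{(10*)}(4) = ((-4)² - 44)/4 = -7`. -/
theorem cm_value_level_ten :
    jnStar 10 ((3 + Complex.I) / 10) = -4 ∧
    cmPointC (formMat 10 (-6) 1) = (3 + Complex.I) / 10 ∧
    formMat 10 (-6) 1 ∈ QdN 4 10 ∧
    (∀ Q ∈ QdN 4 10, ∃ g ∈ FrickeGroup 10, Q = (g.1)ᵀ * formMat 10 (-6) 1 * g.1) ∧
    stabOrder (FrickeGroup 10) (formMat 10 (-6) 1) = 4 ∧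
    t2Star 10 (Polynomial.X ^ 2 - Polynomial.C 44) 4 = -7 := by
  exact ⟨jnStar_ten_threeAddI_div_ten, cmPointC_formMat_ten_neg_six_one,
    formMat_ten_neg_six_one_mem_QdN, fun _ => exists_mem_frickeGroup_ten_of_mem_QdN_four,
    stabOrder_frickeGroup_ten, t2Star_ten_X_sq_sub_C_four⟩
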